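/- arXiv:2605.00010 — 3 statements merged into one kernel-verified Lean document; each statement's English description precedes it below -/
import Mathlib

section
/- Vee Rule safety (Reduction Rule 2): Let G be a time-expanded network, let ub be a real number with val(G) ≤ ub, and let e = ((α,t),(β,t')) be an arc of G with β ≠ α_s such that for every transfer arc ẽ = ((β,t''),(γ,t''')) of G with t'' ≥ t' and γ ≠ β one has w(e) + w(ẽ) > ub. Then no feasible trajectory P with val(P) = val(G) uses e; consequently val(G − e) = val(G), where G − e is G with the arc e deleted. -/
/-!
An optimal trajectory that uses `e = ((a, t), (b, t'))` must later leave the body `b`, since it ends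
at `as ≠ b`; the first arc on which it does so is a transfer arc `((b, t''), (c, t'''))` with
`t' ≤ t''`, because time increases along arcs (`TEN.exists_transfer_arc`). It is a different arc of
the trajectory from `e`, so by nonnegativity of the weights the value of the trajectory is at least
the sum of the two weights (`TEN.exists_tail_of_uses`), which exceeds `ub ≥ vG`: a contradiction.
Hence an optimal trajectory of `G` survives the deletion of `e`, while every trajectory of the
smaller network is one of `G` with the same value.
-/

/-- A time-expanded network over bodies `A` and time grid `T`:
a directed graph on `A × T` whose arcs strictly increase the time coordinate,
with nonnegative arc weights. -/
structure TEN (A T : Type) [LinearOrder T] where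
  E : (A × T) → (A × T) → Prop
  w : (A × T) → (A × T) → ℝ
  time_lt : ∀ u v, E u v → u.2 < v.2
  w_nonneg : ∀ u v, E u v → 0 ≤ w u v

namespace TEN

variable {A T : Type} [LinearOrder T]

/-- A directed path (given as its list of vertices) from `u` to `v` in `G`. -/
def IsPathFrom (G : TEN A T) (u v : A × T) (p : List (A × T)) : Prop :=
  p.Chain' (fun a b => G.E a b) ∧ p.head? = some u ∧ p.getLast? = some v

/-- The value of a trajectory: the sum of the weights of its arcs. -/
def val (G : TEN A T) (p : List (A × T)) : ℝ :=
  ((p.zip p.tail).map fun e => G.w e.1 e.2).sum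

/-- A feasible trajectory: a directed path from `(αs, t0)` to `(αs, tmax)` that
visits every body at least once. -/
def Feasible (G : TEN A T) (as : A) (t0 tmax : T) (p : List (A × T)) : Prop :=
  G.IsPathFrom (as, t0) (as, tmax) p ∧ ∀ a : A, ∃ t : T, (a, t) ∈ p

/-- The trajectory `p` uses the arc `(u, v)`. -/
def Uses (p : List (A × T)) (u v : A × T) : Prop :=
  (u, v) ∈ p.zip p.tail

/-- Minimum total weight of a directed path from `u` to `v` (`⊤` if none exists). -/
noncomputable def dist (G : TEN A T) (u v : A × T) : EReal :=
  sInf {x : EReal | ∃ p, G.IsPathFrom u v p ∧ x = (G.val p : EReal)}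

end TEN

namespace TEN

variable {A T : Type} [LinearOrder T]

lemma val_cons_cons (G : TEN A T) (x y : A × T) (l : List (A × T)) :
    G.val (x :: y :: l) = G.w x y + G.val (y :: l) := by
  simp [val]

lemma val_nonneg (G : TEN A T) (p : List (A × T)) (hp : p.IsChain G.E) : 0 ≤ G.val p := by
  induction p with
  | nil => simp [val]
  | cons x l ih =>
    cases l with
    | nil => simp [val]
    | cons y l =>
      rw [List.isChain_cons_cons] at hp
      rw [val_cons_cons]
      exact add_nonneg (G.w_nonneg _ _ hp.1) (ih hp.2)

/-- A path through the arc `(u, v)` has a final segment starting at `v`, and its value is at least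
the weight of that arc plus the value of the segment. -/
lemma exists_tail_of_uses (G : TEN A T) {u v z : A × T} (p : List (A × T))
    (hp : p.IsChain G.E) (hz : p.getLast? = some z) (hu : Uses p u v) :
    ∃ l, (v :: l).IsChain G.E ∧ (v :: l).getLast? = some z ∧
      G.w u v + G.val (v :: l) ≤ G.val p := by
  induction p with
  | nil => simp [Uses] at hu
  | cons x l ih =>
    cases l with
    | nil => simp [Uses] at hu
    | cons y l =>
      rw [List.isChain_cons_cons] at hp
      rw [List.getLast?_cons_cons] at hz
      rw [val_cons_cons]
      have hu' : (u = x ∧ v = y) ∨ Uses (y :: l) u v := by simpa [Uses] using hu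
      rcases hu' with ⟨rfl, rfl⟩ | hu'
      · exact ⟨l, hp.2, hz, le_rfl⟩
      · obtain ⟨m, h1, h2, h3⟩ := ih hp.2 hz hu'
        exact ⟨m, h1, h2, by linarith [G.w_nonneg _ _ hp.1]⟩

/-- A path from body `b` to another body contains a transfer arc out of `b`, no earlier than the
start of the path and of weight at most the value of the path. -/
lemma exists_transfer_arc (G : TEN A T) {b : A} {z : A × T} (hzb : z.1 ≠ b)
    (l : List (A × T)) (s : T) (hp : ((b, s) :: l).IsChain G.E)
    (hz : ((b, s) :: l).getLast? = some z) :
    ∃ (t'' t''' : T) (c : A), G.E (b, t'') (c, t''') ∧ s ≤ t'' ∧ c ≠ b ∧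
      G.w (b, t'') (c, t''') ≤ G.val ((b, s) :: l) := by
  induction l generalizing s with
  | nil =>
    simp only [List.getLast?_singleton, Option.some.injEq] at hz
    exact absurd (by rw [← hz]) hzb
  | cons y l ih =>
    obtain ⟨c, r⟩ := y
    rw [List.isChain_cons_cons] at hp
    rw [List.getLast?_cons_cons] at hz
    rw [val_cons_cons]
    by_cases hc : c = b
    · subst hc
      obtain ⟨t'', t''', d, h1, h2, h3, h4⟩ := ih r hp.2 hz
      have hsr : s < r := G.time_lt _ _ hp.1
      exact ⟨t'', t''', d, h1, hsr.le.trans h2, h3, by linarith [G.w_nonneg _ _ hp.1]⟩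
    · exact ⟨s, r, c, hp.1, le_rfl, hc, by linarith [G.val_nonneg _ hp.2]⟩

/-- A path of `G` that avoids the arc `(u, v)` is a path of every network retaining all other
arcs of `G`. -/
lemma isChain_of_not_uses (G G' : TEN A T) {u v : A × T}
    (hE : ∀ x y, G.E x y → (x, y) ≠ (u, v) → G'.E x y) (p : List (A × T))
    (hp : p.IsChain G.E) (hu : ¬ Uses p u v) : p.IsChain G'.E := by
  induction p with
  | nil => exact .nil
  | cons x l ih =>
    cases l with
    | nil => exact .singleton _
    | cons y l =>
      rw [List.isChain_cons_cons] at hp ⊢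
      refine ⟨hE _ _ hp.1 fun h => hu ?_, ih hp.2 fun h => hu ?_⟩
      · simp [Uses, ← h]
      · exact List.mem_cons_of_mem _ h

end TEN

/-- **Vee Rule safety.** If `e = ((α,t),(β,t'))` is an arc with `β ≠ αs` such that
every transfer arc leaving body `β` at a time `t'' ≥ t'` is too expensive together
with `e` (their combined weight exceeds `ub ≥ val G`), then no optimal feasible
trajectory uses `e`, and deleting `e` preserves the optimal value. -/
theorem vee_rule_safe {A T : Type} [Fintype A] [Fintype T] [LinearOrder T]
    (G G' : TEN A T) (as : A) (t0 tmax : T)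
    (ht0 : ∀ t : T, t0 ≤ t) (htmax : ∀ t : T, t ≤ tmax)
    (ub vG : ℝ)
    (hvG : IsLeast {x : ℝ | ∃ p, G.Feasible as t0 tmax p ∧ G.val p = x} vG)
    (hub : vG ≤ ub)
    (a b : A) (t t' : T)
    (he : G.E (a, t) (b, t')) (hb : b ≠ as)
    (hvee : ∀ (t'' t''' : T) (c : A), G.E (b, t'') (c, t''') → t' ≤ t'' → c ≠ b →
      ub < G.w (a, t) (b, t') + G.w (b, t'') (c, t'''))
    (hE : ∀ u v : A × T, G'.E u v ↔ G.E u v ∧ (u, v) ≠ ((a, t), (b, t')))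
    (hw : G'.w = G.w) :
    (∀ p, G.Feasible as t0 tmax p → G.val p = vG → ¬ TEN.Uses p (a, t) (b, t')) ∧
    IsLeast {x : ℝ | ∃ p, G'.Feasible as t0 tmax p ∧ G'.val p = x} vG := by
  have hno : ∀ p, G.Feasible as t0 tmax p → G.val p = vG →
      ¬ TEN.Uses p (a, t) (b, t') := by
    rintro p ⟨⟨hp, -, hlast⟩, -⟩ hval hu
    obtain ⟨l, h1, h2, h3⟩ := G.exists_tail_of_uses p hp hlast hu
    obtain ⟨t'', t''', c, h4, h5, h6, h7⟩ := G.exists_transfer_arc hb.symm l t' h1 h2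
    linarith [hvee t'' t''' c h4 h5 h6]
  have hval' : ∀ p, G'.val p = G.val p := fun p => by simp [TEN.val, hw]
  refine ⟨hno, ?_, ?_⟩
  · obtain ⟨p, hp, hpv⟩ := hvG.1
    have hu := hno p hp hpv
    obtain ⟨⟨hc, hend⟩, hvis⟩ := hp
    exact ⟨p, ⟨⟨G.isChain_of_not_uses G' (fun x y h h' => (hE x y).2 ⟨h, h'⟩) p hc hu, hend⟩,
      hvis⟩, (hval' p).trans hpv⟩
  · rintro x ⟨p, ⟨⟨hc, hend⟩, hvis⟩, rfl⟩
    exact hvG.2 ⟨p, ⟨⟨List.IsChain.imp (fun x y h => ((hE x y).1 h).1) hc, hend⟩, hvis⟩,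
      (hval' p).symm⟩
end

section
/- Interval relaxation is a lower bound (Lemma: interval-lb, graph form): Let G be a time-expanded network and, for each body α, let Λ(α) be a partition of 𝒯, giving the time-interval network I. Then for every feasible trajectory P in G there exists a directed walk W in I from (α_s, λ_0) to (α_s, λ_max) — where λ_0 ∈ Λ(α_s) contains t_0 and λ_max ∈ Λ(α_s) contains t_max — such that W contains, for every body α ∈ Α, a vertex of the form (α,λ), and the total weight of W is at most val(P). Consequently, the minimum total weight over all such walks in I is at most val(G). -/
namespace TEN

variable {A T : Type} [LinearOrder T]

/-- `Λ` assigns to every body a partition of the time grid: every time point lies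
in exactly one part. -/
def IsTimePartition (L : A → Set (Set T)) : Prop :=
  ∀ (a : A) (t : T), ∃! lam : Set T, lam ∈ L a ∧ t ∈ lam

/-- Arc of the time-interval network `I`: two distinct interval-vertices are
connected whenever some pair of represented time points is connected in `G`. -/
def IArc (G : TEN A T) (L : A → Set (Set T)) (u v : A × Set T) : Prop :=
  u.2 ∈ L u.1 ∧ v.2 ∈ L v.1 ∧ u ≠ v ∧
    ∃ t ∈ u.2, ∃ t' ∈ v.2, G.E (u.1, t) (v.1, t')

/-- Weight of an arc of the time-interval network: the minimum weight of a
transfer between represented time points. -/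
noncomputable def iw (G : TEN A T) (u v : A × Set T) : ℝ :=
  sInf {x : ℝ | ∃ t ∈ u.2, ∃ t' ∈ v.2, G.E (u.1, t) (v.1, t') ∧ x = G.w (u.1, t) (v.1, t')}

/-- Total weight of a walk in the time-interval network. -/
noncomputable def ival (G : TEN A T) (W : List (A × Set T)) : ℝ :=
  ((W.zip W.tail).map fun e => G.iw e.1 e.2).sum

/-- A directed walk in the time-interval network from `(αs, λ0)` to `(αs, λmax)`
that contains, for every body, a vertex of that body. -/
def IFeasibleWalk (G : TEN A T) (L : A → Set (Set T)) (as : A)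
    (lam0 lamMax : Set T) (W : List (A × Set T)) : Prop :=
  W.Chain' (fun u v => G.IArc L u v) ∧ W.head? = some (as, lam0) ∧
    W.getLast? = some (as, lamMax) ∧ ∀ a : A, ∃ lam : Set T, (a, lam) ∈ W

end TEN

namespace TEN

variable {A T : Type} [LinearOrder T]

lemma iw_nonneg (G : TEN A T) (u v : A × Set T) : 0 ≤ G.iw u v := by
  apply Real.sInf_nonneg
  rintro x ⟨t, -, t', -, hE, rfl⟩
  exact G.w_nonneg _ _ hE

lemma iw_le (G : TEN A T) {u v : A × Set T} {t t' : T} (ht : t ∈ u.2) (ht' : t' ∈ v.2)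
    (hE : G.E (u.1, t) (v.1, t')) : G.iw u v ≤ G.w (u.1, t) (v.1, t') := by
  refine csInf_le ⟨0, ?_⟩ ⟨t, ht, t', ht', hE, rfl⟩
  rintro x ⟨s, -, s', -, h, rfl⟩
  exact G.w_nonneg _ _ h

lemma ival_nonneg (G : TEN A T) (W : List (A × Set T)) : 0 ≤ G.ival W := by
  apply List.sum_nonneg
  intro x hx
  obtain ⟨e, -, rfl⟩ := List.mem_map.1 hx
  exact G.iw_nonneg _ _

/-- The image of a path under a choice `f a t` of the part of `L a` containing `t`, with
consecutive repetitions removed, is a walk of no larger weight. The walk is presented with an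
explicit first vertex so that an arc can be prepended in the induction. -/
lemma exists_interval_walk (G : TEN A T) (L : A → Set (Set T)) (f : A → T → Set T)
    (hf : ∀ a t, f a t ∈ L a ∧ t ∈ f a t) (p : List (A × T)) :
    ∀ u v : A × T, (u :: p).IsChain (fun a b => G.E a b) → (u :: p).getLast? = some v →
      ∃ W : List (A × Set T),
        ((u.1, f u.1 u.2) :: W).IsChain (fun a b => G.IArc L a b) ∧
        ((u.1, f u.1 u.2) :: W).getLast? = some (v.1, f v.1 v.2) ∧
        (∀ x ∈ u :: p, (x.1, f x.1 x.2) ∈ (u.1, f u.1 u.2) :: W) ∧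
        G.ival ((u.1, f u.1 u.2) :: W) ≤ G.val (u :: p) := by
  induction p with
  | nil =>
    intro u v _ hlast
    obtain rfl : u = v := by simpa using hlast
    exact ⟨[], by simp, by simp, by simp, by simp [ival, val]⟩
  | cons u' p ih =>
    intro u v hchain hlast
    rw [List.isChain_cons_cons] at hchain
    obtain ⟨hE, hchain⟩ := hchain
    obtain ⟨W, hW, hWl, hWm, hWv⟩ := ih u' v hchain (by simpa using hlast)
    have hval : G.val (u :: u' :: p) = G.w u u' + G.val (u' :: p) := by simp [val]
    by_cases heq : (u.1, f u.1 u.2) = (u'.1, f u'.1 u'.2)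
    -- Both endpoints have the same image: the arc is dropped.
    · refine ⟨W, heq ▸ hW, heq ▸ hWl, ?_, ?_⟩
      · intro x hx
        rcases List.mem_cons.1 hx with rfl | hx
        · simp
        · rw [heq]; exact hWm x hx
      · rw [heq, hval]
        linarith [G.w_nonneg _ _ hE]
    · refine ⟨(u'.1, f u'.1 u'.2) :: W, ?_, ?_, ?_, ?_⟩
      · rw [List.isChain_cons_cons]
        exact ⟨⟨(hf _ _).1, (hf _ _).1, heq, u.2, (hf _ _).2, u'.2, (hf _ _).2, hE⟩, hW⟩
      · simpa using hWl
      · intro x hx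
        rcases List.mem_cons.1 hx with rfl | hx
        · simp
        · exact List.mem_cons_of_mem _ (hWm x hx)
      · have h1 : G.ival ((u.1, f u.1 u.2) :: (u'.1, f u'.1 u'.2) :: W) =
            G.iw (u.1, f u.1 u.2) (u'.1, f u'.1 u'.2) + G.ival ((u'.1, f u'.1 u'.2) :: W) := by
          simp [ival]
        have h2 : G.iw (u.1, f u.1 u.2) (u'.1, f u'.1 u'.2) ≤ G.w u u' :=
          G.iw_le (hf u.1 u.2).2 (hf u'.1 u'.2).2 hE
        rw [h1, hval]
        linarith

end TEN

/-- **Interval relaxation is a lower bound (graph form).** For every feasible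
trajectory `P` of `G` there is a walk `W` in the time-interval network from
`(αs, λ0)` to `(αs, λmax)` visiting every body whose total weight is at most
`val P`; consequently the minimum total weight over all such walks is at most
`val G`. -/
theorem interval_relaxation_lower_bound {A T : Type} [Fintype A] [Fintype T] [LinearOrder T]
    (G : TEN A T) (L : A → Set (Set T)) (hL : TEN.IsTimePartition L)
    (as : A) (t0 tmax : T)
    (ht0 : ∀ t : T, t0 ≤ t) (htmax : ∀ t : T, t ≤ tmax)
    (lam0 lamMax : Set T)
    (hlam0 : lam0 ∈ L as) (ht0mem : t0 ∈ lam0)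
    (hlamMax : lamMax ∈ L as) (htmaxmem : tmax ∈ lamMax) :
    (∀ p, G.Feasible as t0 tmax p →
      ∃ W, G.IFeasibleWalk L as lam0 lamMax W ∧ G.ival W ≤ G.val p) ∧
    (∀ vG : ℝ, IsLeast {x : ℝ | ∃ p, G.Feasible as t0 tmax p ∧ G.val p = x} vG →
      sInf {x : ℝ | ∃ W, G.IFeasibleWalk L as lam0 lamMax W ∧ G.ival W = x} ≤ vG) := by
  have key : ∀ p, G.Feasible as t0 tmax p →
      ∃ W, G.IFeasibleWalk L as lam0 lamMax W ∧ G.ival W ≤ G.val p := by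
    rintro p ⟨⟨hchain, hhead, hlast⟩, hvisit⟩
    choose f hf hfu using hL
    have h0 : lam0 = f as t0 := hfu as t0 lam0 ⟨hlam0, ht0mem⟩
    have hm : lamMax = f as tmax := hfu as tmax lamMax ⟨hlamMax, htmaxmem⟩
    subst h0 hm
    cases p with
    | nil => simp at hhead
    | cons u p =>
      obtain rfl : u = (as, t0) := by simpa using hhead
      obtain ⟨W, hW, hWl, hWm, hWv⟩ := G.exists_interval_walk L f hf p _ _ hchain hlast
      refine ⟨_, ⟨hW, rfl, hWl, fun a => ?_⟩, hWv⟩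
      obtain ⟨t, ht⟩ := hvisit a
      exact ⟨_, hWm _ ht⟩
  refine ⟨key, ?_⟩
  rintro vG ⟨⟨p, hp, rfl⟩, -⟩
  obtain ⟨W, hW, hWv⟩ := key p hp
  refine le_trans (csInf_le ⟨0, ?_⟩ ⟨W, hW, rfl⟩) hWv
  rintro x ⟨W', -, rfl⟩
  exact G.ival_nonneg W'
end

section
/- ILP solution decomposition (core of the equivalence lemma): Let G be a time-expanded network and let F be a set of arcs of G satisfying: (Departure) for every body α ∈ Α there is at least one transfer arc in F leaving some vertex (α,t); (Flow) for every vertex v of G other than (α_s,t_0) and (α_s,t_max), the number of arcs of F leaving v equals the number of arcs of F entering v; (Vehicle) at most one arc of F leaves (α_s,t_0). Then F is exactly the arc set of a single directed path in G from (α_s,t_0) to (α_s,t_max) that, for every body α ∈ Α, contains a vertex of the form (α,t); that is, F is the arc set of a feasible trajectory. -/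
/-- A conserved arc set with strictly increasing times, with no exception but a sink that no arc
leaves, is empty. -/
lemma eq_empty_of_balanced {A T : Type} [Fintype A] [Fintype T] [LinearOrder T]
    (z : A × T) (F : Set ((A × T) × (A × T)))
    (hlt : ∀ e ∈ F, e.1.2 < e.2.2) (hz : ∀ u, (z, u) ∉ F)
    (hbal : ∀ x, x ≠ z → {u | (x, u) ∈ F}.ncard = {u | (u, x) ∈ F}.ncard) : F = ∅ := by
  by_contra hne
  obtain ⟨⟨x, y⟩, he, hmin⟩ := Set.exists_min_image F (fun e => e.1.2) (Set.toFinite F)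
    (Set.nonempty_iff_ne_empty.2 hne)
  have hxz : x ≠ z := by rintro rfl; exact hz _ he
  have hpos : 0 < {u | (x, u) ∈ F}.ncard := (Set.ncard_pos (Set.toFinite _)).2 ⟨y, he⟩
  rw [hbal x hxz] at hpos
  obtain ⟨u, hu⟩ := (Set.ncard_pos (Set.toFinite _)).1 hpos
  exact absurd (hlt _ hu) (not_lt.2 (hmin _ hu))

open Classical in
/-- An arc set with strictly increasing times that carries one excess outgoing arc at `s` and is
conserved elsewhere, apart from a sink `z` that no arc leaves, is the arc set of a path from `s`
to `z`. If `s = z` no excess is asserted: this is the end of the induction, with the one-vertex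
path. -/
lemma exists_path_of_balanced {A T : Type} [Fintype A] [Fintype T] [LinearOrder T]
    (z : A × T) (n : ℕ) : ∀ (F : Set ((A × T) × (A × T))) (s : A × T), F.ncard = n →
    (∀ e ∈ F, e.1.2 < e.2.2) → (∀ u, (z, u) ∉ F) →
    (∀ x, x ≠ z → {u | (x, u) ∈ F}.ncard = {u | (u, x) ∈ F}.ncard + if x = s then 1 else 0) →
    ∃ p : List (A × T), (s :: p).IsChain (fun a b => (a, b) ∈ F) ∧
      (s :: p).getLast? = some z ∧ ∀ e, e ∈ F ↔ e ∈ (s :: p).zip p := by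
  induction n with
  | zero =>
    intro F s hn hlt hz hbal
    have hF : F = ∅ := (Set.ncard_eq_zero (Set.toFinite _)).1 hn
    subst hF
    have hsz : s = z := by
      by_contra h
      simpa using hbal s h
    exact ⟨[], by simp, by simp [hsz], by simp⟩
  | succ n ih =>
    intro F s hn hlt hz hbal
    by_cases hsz : s = z
    · have := eq_empty_of_balanced z F hlt hz (fun x hx => by
        simpa [hsz, hx] using hbal x hx)
      simp [this] at hn
    have hpos : 0 < {u | (s, u) ∈ F}.ncard := by rw [hbal s hsz]; simp
    obtain ⟨v, hv⟩ := (Set.ncard_pos (Set.toFinite _)).1 hpos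
    replace hv : (s, v) ∈ F := hv
    have hout : ∀ x, {u | (x, u) ∈ F}.ncard =
        {u | (x, u) ∈ F \ {(s, v)}}.ncard + if x = s then 1 else 0 := by
      intro x
      split_ifs with h
      · subst h
        rw [← Set.ncard_sdiff_singleton_add_one (a := v) hv (Set.toFinite _)]
        congr 2
        ext u; simp
      · simp [h]
    have hin : ∀ x, {u | (u, x) ∈ F}.ncard =
        {u | (u, x) ∈ F \ {(s, v)}}.ncard + if x = v then 1 else 0 := by
      intro x
      split_ifs with h
      · subst h
        rw [← Set.ncard_sdiff_singleton_add_one (a := s) hv (Set.toFinite _)]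
        congr 2
        ext u; simp
      · simp [h]
    -- Deleting `(s, v)` moves the excess outgoing arc from `s` to `v`.
    obtain ⟨p, hc, hl, hp⟩ := ih (F \ {(s, v)}) v
      (by rw [Set.ncard_sdiff_singleton_of_mem hv, hn]; rfl)
      (fun e he => hlt e he.1) (fun u hu => hz u hu.1)
      (fun x hx => by
        have h1 := hbal x hx
        have h2 := hout x
        have h3 := hin x
        omega)
    refine ⟨v :: p, ?_, ?_, fun e => ?_⟩
    · exact List.isChain_cons_cons.2 ⟨hv, hc.imp fun _ _ h => h.1⟩
    · rw [List.getLast?_cons_cons]; exact hl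
    · rw [List.zip_cons_cons, List.mem_cons, ← hp e]
      by_cases h : e = (s, v)
      · simp [h, hv]
      · simp [h]

/-- **ILP solution decomposition.** If a set `F` of arcs of `G` satisfies the
Departure constraint (every body has an outgoing transfer arc in `F`), the Flow
constraint (in-degree equals out-degree at every vertex other than `(αs,t0)` and
`(αs,tmax)`), and the Vehicle constraint (at most one arc of `F` leaves
`(αs,t0)`), then `F` is exactly the arc set of a single directed path from
`(αs,t0)` to `(αs,tmax)` visiting every body, i.e. of a feasible trajectory. -/
theorem ilp_solution_decomposition {A T : Type} [Fintype A] [Fintype T] [LinearOrder T]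
    (G : TEN A T) (as : A) (t0 tmax : T)
    (ht0 : ∀ t : T, t0 ≤ t) (htmax : ∀ t : T, t ≤ tmax)
    (F : Set ((A × T) × (A × T)))
    (hFE : ∀ e ∈ F, G.E e.1 e.2)
    (hdep : ∀ a : A, ∃ (t : T) (b : A) (t' : T), ((a, t), (b, t')) ∈ F ∧ b ≠ a)
    (hflow : ∀ v : A × T, v ≠ (as, t0) → v ≠ (as, tmax) →
      {u : A × T | (v, u) ∈ F}.ncard = {u : A × T | (u, v) ∈ F}.ncard)
    (hveh : {u : A × T | ((as, t0), u) ∈ F}.ncard ≤ 1) :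
    ∃ p, G.Feasible as t0 tmax p ∧ ∀ u v : A × T, ((u, v) ∈ F ↔ TEN.Uses p u v) := by
  classical
  have hlt : ∀ e ∈ F, e.1.2 < e.2.2 := fun e he => G.time_lt _ _ (hFE e he)
  have hz : ∀ u, ((as, tmax), u) ∉ F := fun u hu => absurd (hlt _ hu) (not_lt.2 (htmax _))
  have hin0 : {u | (u, (as, t0)) ∈ F}.ncard = 0 := by
    rw [Set.ncard_eq_zero (Set.toFinite _), Set.eq_empty_iff_forall_notMem]
    exact fun u hu => absurd (hlt _ hu) (not_lt.2 (ht0 _))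
  have hout : {u | ((as, t0), u) ∈ F}.ncard ≠ 0 := by
    intro h0
    have hF := eq_empty_of_balanced (as, tmax) F hlt hz fun x hx => by
      by_cases hxs : x = (as, t0)
      · rw [hxs, h0, hin0]
      · exact hflow x hxs hx
    obtain ⟨t, b, t', h, -⟩ := hdep as
    simp [hF] at h
  obtain ⟨p, hc, hl, hp⟩ := exists_path_of_balanced (as, tmax) _ F (as, t0) rfl hlt hz
    fun x hx => by
      split_ifs with hxs
      · subst hxs; omega
      · exact hflow x hxs hx
  refine ⟨(as, t0) :: p, ⟨⟨hc.imp fun _ _ h => hFE _ h, rfl, hl⟩, fun a => ?_⟩,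
    fun u v => hp (u, v)⟩
  obtain ⟨t, b, t', h, -⟩ := hdep a
  exact ⟨t, (List.of_mem_zip ((hp _).1 h)).1⟩
end
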